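/- arXiv:2311.17433 — 2 statements merged into one kernel-verified Lean document; each statement's English description precedes it below -/
import Mathlib

section
/- Let A₂(m,ℓ) be the (2m+2ℓ)×(2m+2ℓ) symmetric block matrix [[R_{2m}, J],[J, -R_{2ℓ}]], where R_k is the k×k reverse identity matrix. Then the characteristic polynomial of A₂(m,ℓ) is (x^2 - (4mℓ+1))(x-1)^{m+ℓ-1}(x+1)^{m+ℓ-1}. -/
open Polynomial Matrix

/-- The all-ones matrix. -/
def Jmat (p q : Type*) : Matrix p q ℤ := Matrix.of fun _ _ => 1

/-- The `k×k` reverse identity matrix (`1` on the antidiagonal). -/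
def revId (k : ℕ) : Matrix (Fin k) (Fin k) ℤ :=
  Matrix.of fun i j => if (i : ℕ) + (j : ℕ) = k - 1 then 1 else 0

/-- `A₂(m,ℓ) = [[R_{2m}, J],[J, -R_{2ℓ}]]`. -/
def A2mat (m l : ℕ) : Matrix (Fin (2 * m) ⊕ Fin (2 * l)) (Fin (2 * m) ⊕ Fin (2 * l)) ℤ :=
  Matrix.fromBlocks (revId (2 * m)) (Jmat _ _) (Jmat _ _) (-(revId (2 * l)))

/-!
Suppose `A *ᵥ u = a • u` and `D *ᵥ v = d • v`. The matrix `[[A, u yᵀ], [v xᵀ, D]]` is a rank-one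
update of a block triangular matrix, so the matrix determinant lemma computes its determinant.
Applied to characteristic matrices, this shows that its characteristic polynomial times
`(X - a)(X - d)` is `χ_A χ_D ((X - a)(X - d) - (x ⬝ u)(y ⬝ v))`. Here
`A = R_{2m}` and `D = -R_{2ℓ}` have the all-ones vector as eigenvector for `1` and `-1`, and
`±R_{2k}` has the form `[[0, B], [B, 0]]` with `B² = 1`, so that its characteristic polynomial
is `(X² - 1)ᵏ`.
-/

section CommRing

variable {R n p : Type*} [CommRing R] [Fintype n] [DecidableEq n] [Fintype p] [DecidableEq p]

/-- A form of the matrix determinant lemma without inverses: in the invertible case `d⁻¹ • t` is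
`A⁻¹ *ᵥ u`. -/
lemma det_add_vecMulVec_of_mulVec_eq_smul {A : Matrix n n R} {u t : n → R} {d : R}
    (h : A *ᵥ t = d • u) (v : n → R) : (A + vecMulVec u v).det * d = A.det * (d + v ⬝ᵥ t) := by
  let U := replicateCol Unit u
  let V := replicateRow Unit v
  let T := replicateCol Unit t
  have hAT : A * T = d • U := by
    rw [← replicateCol_mulVec, h, replicateCol_smul]
  have hVT : V * T = diagonal fun _ => v ⬝ᵥ t := by
    ext; simp [V, T]
  have hfactor : fromBlocks A U (-V) 1 * fromBlocks 1 (-T) 0 (d • 1)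
      = fromBlocks A 0 (-V) (diagonal fun _ => d + v ⬝ᵥ t) := by
    rw [fromBlocks_multiply]
    congr 1
    · simp
    · simp [hAT]
    · simp
    · simp [hVT, smul_one_eq_diagonal, add_comm]
  have hdet := congrArg det hfactor
  simpa [U, V, ← vecMulVec_eq] using hdet

lemma det_fromBlocks_vecMulVec_of_mulVec_eq_smul {A : Matrix n n R} {D : Matrix p p R}
    {u : n → R} {v : p → R} {a d : R} (hA : A *ᵥ u = a • u) (hD : D *ᵥ v = d • v)
    (x : n → R) (y : p → R) :
    (fromBlocks A (vecMulVec u y) (vecMulVec v x) D).det * (a * d)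
      = A.det * D.det * (a * d - (x ⬝ᵥ u) * (y ⬝ᵥ v)) := by
  have hsplit : fromBlocks A (vecMulVec u y) (vecMulVec v x) D
      = fromBlocks A (vecMulVec u y) 0 D + vecMulVec (Sum.elim (0 : n → R) v) (Sum.elim x 0) := by
    ext (i | i) (j | j) <;> simp [vecMulVec_apply]
  have hsolve : fromBlocks A (vecMulVec u y) 0 D *ᵥ Sum.elim (-((y ⬝ᵥ v) • u)) (a • v)
      = (a * d) • Sum.elim (0 : n → R) v := by
    rw [fromBlocks_mulVec, Sum.elim_comp_inl, Sum.elim_comp_inr, mulVec_neg, mulVec_smul, hA,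
      mulVec_smul, vecMulVec_mulVec, mulVec_smul, hD, zero_mulVec, zero_add]
    ext (i | i)
    · simp [mul_left_comm, mul_comm]
    · simp [mul_assoc]
  rw [hsplit, det_add_vecMulVec_of_mulVec_eq_smul hsolve, det_fromBlocks_zero₂₁,
    sumElim_dotProduct_sumElim, dotProduct_neg, dotProduct_smul, zero_dotProduct, smul_eq_mul]
  ring

lemma charmatrix_mulVec_of_mulVec_eq_smul {A : Matrix n n R} {u : n → R} {a : R}
    (h : A *ᵥ u = a • u) : A.charmatrix *ᵥ (C ∘ u) = (X - C a) • (C ∘ u) := by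
  have hC : A.map C *ᵥ (C ∘ u) = C a • (C ∘ u) := by
    ext1 i
    rw [← RingHom.map_mulVec, h]
    simp
  rw [charmatrix, sub_mulVec, sub_smul, scalar_apply, ← smul_one_eq_diagonal, smul_mulVec,
    one_mulVec, RingHom.mapMatrix_apply, hC]

theorem charpoly_fromBlocks_vecMulVec_of_mulVec_eq_smul {A : Matrix n n R} {D : Matrix p p R}
    {u : n → R} {v : p → R} {a d : R} (hA : A *ᵥ u = a • u) (hD : D *ᵥ v = d • v)
    (x : n → R) (y : p → R) :
    (fromBlocks A (vecMulVec u y) (vecMulVec v x) D).charpoly * ((X - C a) * (X - C d))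
      = A.charpoly * D.charpoly * ((X - C a) * (X - C d) - C ((x ⬝ᵥ u) * (y ⬝ᵥ v))) := by
  have hblocks : (fromBlocks A (vecMulVec u y) (vecMulVec v x) D).charmatrix
      = fromBlocks A.charmatrix (vecMulVec (C ∘ u) (-(C ∘ y)))
          (vecMulVec (C ∘ v) (-(C ∘ x))) D.charmatrix := by
    rw [charmatrix_fromBlocks]
    congr 1 <;> ext1 <;> simp [vecMulVec_apply]
  have hdet := det_fromBlocks_vecMulVec_of_mulVec_eq_smul (charmatrix_mulVec_of_mulVec_eq_smul hA)
    (charmatrix_mulVec_of_mulVec_eq_smul hD) (-(C ∘ x)) (-(C ∘ y))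
  rw [charpoly, hblocks, hdet]
  simp only [charpoly, neg_dotProduct, neg_mul_neg, ← RingHom.map_dotProduct, map_mul]

lemma charmatrix_map_expand (k : ℕ) (M : Matrix n n R) :
    M.charmatrix.map (expand R k) = diagonal (fun _ => X ^ k) - M.map C := by
  ext1 i j
  by_cases h : i = j <;> simp [h]

lemma X_pow_mul_charpoly_fromBlocks_zero₁₁_zero₂₂ (B : Matrix n p R) (B' : Matrix p n R) :
    X ^ Fintype.card p * (fromBlocks 0 B B' 0).charpoly
      = X ^ Fintype.card n * expand R 2 (B' * B).charpoly := by
  have hfactor : (fromBlocks 0 B B' 0).charmatrix * fromBlocks 1 (B.map C) 0 ((X : R[X]) • 1)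
      = fromBlocks ((X : R[X]) • 1) 0 (-B'.map C) ((B' * B).charmatrix.map (expand R 2)) := by
    rw [charmatrix_fromBlocks, fromBlocks_multiply]
    congr 1
    · simp [← smul_one_eq_diagonal]
    · simp [← smul_one_eq_diagonal]
    · simp
    · rw [charmatrix_map_expand, Matrix.neg_mul, ← Matrix.map_mul]
      simp [← smul_one_eq_diagonal, smul_smul, sq, sub_eq_neg_add]
  have hdet := congrArg det hfactor
  have hexp : ((B' * B).charmatrix.map (expand R 2)).det = expand R 2 (B' * B).charpoly :=
    (AlgHom.map_det (expand R 2) _).symm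
  rw [det_mul, det_fromBlocks_zero₂₁, det_fromBlocks_zero₁₂, hexp] at hdet
  simpa [charpoly, mul_comm] using hdet

lemma charpoly_fromBlocks_zero₁₁_zero₂₂ (B B' : Matrix n n R) :
    (fromBlocks 0 B B' 0).charpoly = expand R 2 (B' * B).charpoly :=
  (isRegular_X_pow _).left (X_pow_mul_charpoly_fromBlocks_zero₁₁_zero₂₂ B B')

end CommRing

lemma Jmat_eq_vecMulVec_one (p q : Type*) : Jmat p q = vecMulVec 1 1 := by
  ext; simp [Jmat, vecMulVec_apply]

lemma revId_eq_permMatrix (k : ℕ) : revId k = Fin.revPerm.permMatrix ℤ := by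
  ext i j
  simp only [revId, of_apply, PEquiv.toMatrix_apply, Equiv.toPEquiv_apply, Fin.revPerm_apply,
    Option.mem_def, Option.some.injEq, Fin.ext_iff, Fin.val_rev]
  split_ifs <;> omega

lemma revId_mulVec_one (k : ℕ) : revId k *ᵥ 1 = 1 := by
  rw [revId_eq_permMatrix, permMatrix_mulVec, Pi.one_comp]

lemma revId_mul_revId (k : ℕ) : revId k * revId k = 1 := by
  rw [revId_eq_permMatrix, ← permMatrix_mul, ← permMatrix_one]
  congr 1
  ext; simp

lemma revId_two_mul (m : ℕ) :
    revId (2 * m) = reindex (finSumFinEquiv.trans (finCongr (two_mul m).symm))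
      (finSumFinEquiv.trans (finCongr (two_mul m).symm)) (fromBlocks 0 (revId m) (revId m) 0) := by
  rw [← Equiv.symm_apply_eq]
  ext (i | i) (j | j) <;>
    simp only [revId, reindex_symm, reindex_apply, Equiv.symm_symm, Equiv.trans_apply,
      submatrix_apply, of_apply, finCongr_apply, Fin.val_cast, finSumFinEquiv_apply_left,
      finSumFinEquiv_apply_right, Fin.val_castAdd, Fin.val_natAdd, fromBlocks_apply₁₁,
      fromBlocks_apply₁₂, fromBlocks_apply₂₁, fromBlocks_apply₂₂, Matrix.zero_apply] <;>
    grind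

lemma charpoly_revId_two_mul (m : ℕ) : (revId (2 * m)).charpoly = (X ^ 2 - 1) ^ m := by
  rw [revId_two_mul, charpoly_reindex, charpoly_fromBlocks_zero₁₁_zero₂₂, revId_mul_revId]
  simp [charpoly_one]

lemma charpoly_neg_revId_two_mul (m : ℕ) : (-revId (2 * m)).charpoly = (X ^ 2 - 1) ^ m := by
  rw [revId_two_mul, reindex_apply, ← Pi.neg_apply, ← Pi.neg_apply, ← submatrix_neg,
    ← reindex_apply, charpoly_reindex, fromBlocks_neg, neg_zero,
    charpoly_fromBlocks_zero₁₁_zero₂₂, neg_mul_neg, revId_mul_revId]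
  simp [charpoly_one]

lemma charpoly_A2mat_mul_X_sq_sub_one (m l : ℕ) :
    (A2mat m l).charpoly * (X ^ 2 - 1)
      = (X ^ 2 - 1) ^ (m + l) * (X ^ 2 - C (4 * (m : ℤ) * l + 1)) := by
  have hpos : revId (2 * m) *ᵥ 1 = (1 : ℤ) • 1 := by
    rw [revId_mulVec_one, one_smul]
  have hneg : -revId (2 * l) *ᵥ 1 = (-1 : ℤ) • 1 := by
    rw [neg_mulVec, revId_mulVec_one, neg_one_smul]
  have h := charpoly_fromBlocks_vecMulVec_of_mulVec_eq_smul hpos hneg 1 1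
  have hroots : (X - C 1) * (X - C (-1)) = (X ^ 2 - 1 : ℤ[X]) := by
    rw [C_neg, C_1]
    ring
  have hcard : ((2 * m : ℕ) : ℤ) * (2 * l : ℕ) = 4 * m * l := by
    push_cast
    ring
  rw [charpoly_revId_two_mul, charpoly_neg_revId_two_mul, ← pow_add, hroots, one_dotProduct_one,
    one_dotProduct_one, Fintype.card_fin, Fintype.card_fin] at h
  rw [A2mat, Jmat_eq_vecMulVec_one, Jmat_eq_vecMulVec_one, h]
  rw [hcard, C_add, C_1]
  ring

theorem stmt2_general (m l : ℕ) (hml : m + l ≠ 0) :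
    (A2mat m l).charpoly
      = (X ^ 2 - C (4 * (m : ℤ) * l + 1)) * (X - 1) ^ (m + l - 1) * (X + 1) ^ (m + l - 1) := by
  have hmonic : (X ^ 2 - 1 : ℤ[X]).Monic := monic_X_pow_sub_C 1 two_ne_zero
  apply mul_right_cancel₀ hmonic.ne_zero
  rw [charpoly_A2mat_mul_X_sq_sub_one, ← pow_sub_one_mul hml, mul_assoc _ ((X - 1) ^ _), ← mul_pow]
  ring

/-- the characteristic polynomial of `A₂(m,ℓ)`. -/
theorem stmt2 (m l : ℕ) (hl : 2 ≤ l) (hml : l ≤ m) :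
    (A2mat m l).charpoly
      = (X ^ 2 - C (4 * (m : ℤ) * l + 1)) * (X - 1) ^ (m + l - 1) * (X + 1) ^ (m + l - 1) :=
  stmt2_general m l (by omega)
end

section
/- The signed graphs A₂(m,ℓ) + α·K₂ and A₂(m',ℓ') + α'·K₂ are cospectral if and only if mℓ = m'ℓ' and m + ℓ + α = m' + ℓ' + α'. Concretely: the block diagonal matrix diag(A₂(m,ℓ), R₂,...,R₂) (with α copies of R₂) has the same characteristic polynomial as diag(A₂(m',ℓ'), R₂,...,R₂) (with α' copies of R₂) if and only if mℓ = m'ℓ' and m + ℓ + α = m' + ℓ' + α'. -/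
open Polynomial Matrix

/-- `A₂(m,ℓ)` together with `α` disjoint copies of `K₂`. -/
def A2plus (m l α : ℕ) :
    Matrix ((Fin (2 * m) ⊕ Fin (2 * l)) ⊕ Fin 2 × Fin α)
      ((Fin (2 * m) ⊕ Fin (2 * l)) ⊕ Fin 2 × Fin α) ℤ :=
  Matrix.fromBlocks (A2mat m l) 0 0 (Matrix.blockDiagonal fun _ : Fin α => revId 2)

/-!
If the columns of `U` span an invariant subspace of `A`, say `A * U = U * T`, then passing from `A`
to `A + U * V` changes the spectrum only there, where `T` becomes `T + V * U` (Rado's extension of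
Brauer's theorem). Joining two matrices of constant row sums `a` and `b` by all-ones blocks is such
a perturbation, so the eigenvalues `a`, `b` are exchanged for those of a `2 × 2` matrix.

The matrix `R_{2m}` is the adjacency matrix of `m` disjoint copies of `K₂`, with characteristic
polynomial `(X² - 1)^m` and row sums `1`. Hence `A₂(m,ℓ) + α·K₂` has characteristic polynomial `P`
with `P (X² - 1) = (X² - 1)^k (X² - 1 - 4mℓ)`, where `k = m + ℓ + α`. The degree recovers `k`, and
cancelling the power of `X² - 1` recovers `mℓ`.
-/

section CharacteristicPolynomials

variable {R n p k : Type*} [CommRing R] [Fintype n] [Fintype p] [Fintype k]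
  [DecidableEq n] [DecidableEq p] [DecidableEq k]

lemma det_sub_mul_mul_det {A : Matrix n n R} {U : Matrix n k R} {T : Matrix k k R}
    (V : Matrix k n R) (h : A * U = U * T) :
    (A - U * V).det * T.det = A.det * (T - V * U).det := by
  have hblock : fromBlocks A U V 1 * fromBlocks 1 (-U) 0 T = fromBlocks A 0 V (T - V * U) := by
    rw [fromBlocks_multiply]
    congr 1
    · simp
    · simp [h]
    · simp
    · simp only [Matrix.mul_neg, one_mul, neg_add_eq_sub]
  simpa only [det_mul, det_fromBlocks_one₂₂, det_fromBlocks_zero₂₁, det_fromBlocks_zero₁₂, det_one,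
    one_mul] using congrArg det hblock

lemma charmatrix_mul_map_C {A : Matrix n n R} {U : Matrix n k R} {T : Matrix k k R}
    (h : A * U = U * T) : A.charmatrix * U.map C = U.map C * T.charmatrix := by
  simp only [charmatrix, RingHom.mapMatrix_apply, Matrix.sub_mul, Matrix.mul_sub]
  rw [← Matrix.map_mul, h, Matrix.map_mul, scalar_comm X (Commute.all X)]

lemma charmatrix_add (A B : Matrix n n R) :
    (A + B).charmatrix = A.charmatrix - B.map C := by
  simp only [charmatrix, map_add, RingHom.mapMatrix_apply, sub_add_eq_sub_sub]

lemma charpoly_add_mul_mul_charpoly {A : Matrix n n R} {U : Matrix n k R} {T : Matrix k k R}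
    (V : Matrix k n R) (h : A * U = U * T) :
    (A + U * V).charpoly * T.charpoly = A.charpoly * (T + V * U).charpoly := by
  simpa only [charpoly, charmatrix_add, Matrix.map_mul] using
    det_sub_mul_mul_det (V.map C) (charmatrix_mul_map_C h)

lemma charpoly_fromBlocks_ones_mul {A : Matrix n n R} {B : Matrix p p R} {a b : R}
    (hA : A *ᵥ 1 = a • 1) (hB : B *ᵥ 1 = b • 1) :
    (fromBlocks A (of fun _ _ => 1) (of fun _ _ => 1) B).charpoly * ((X - C a) * (X - C b)) =
      A.charpoly * B.charpoly *
        ((X - C a) * (X - C b) - C (Fintype.card n * Fintype.card p : R)) := by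
  -- The columns of `U` are the indicator vectors of the two blocks, which span an invariant
  -- subspace of `fromBlocks A 0 0 B`; adding `U * V` creates the off-diagonal ones.
  let U : Matrix (n ⊕ p) (Fin 2) R := of (Sum.elim (fun _ => ![1, 0]) fun _ => ![0, 1])
  let V : Matrix (Fin 2) (n ⊕ p) R := of ![Sum.elim 0 1, Sum.elim 1 0]
  let T : Matrix (Fin 2) (Fin 2) R := !![a, 0; 0, b]
  have hU : fromBlocks A 0 0 B * U = U * T := by
    have hA' (i : n) : ∑ j, A i j = a := by simpa [mulVec, dotProduct] using congrFun hA i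
    have hB' (i : p) : ∑ j, B i j = b := by simpa [mulVec, dotProduct] using congrFun hB i
    ext (i | i) j <;> fin_cases j <;> simp [U, T, Matrix.mul_apply, hA', hB']
  have hUV : fromBlocks A 0 0 B + U * V =
      fromBlocks A (of fun _ _ => 1) (of fun _ _ => 1) B := by
    ext (i | i) (j | j) <;> simp [U, V, Matrix.mul_apply]
  have hVU : T + V * U = !![a, Fintype.card p; Fintype.card n, b] := by
    ext i j
    fin_cases i <;> fin_cases j <;> simp [U, V, T, Matrix.mul_apply, -cons_mul]
  have hT : T.charpoly = (X - C a) * (X - C b) := by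
    simp [T, charpoly, det_fin_two]
  have hTVU : (T + V * U).charpoly =
      (X - C a) * (X - C b) - C (Fintype.card n * Fintype.card p : R) := by
    rw [hVU]
    simp [charpoly, det_fin_two, mul_comm]
  rw [← hUV, ← hT, charpoly_add_mul_mul_charpoly V hU, hTVU, hT, charpoly_fromBlocks_zero₁₂]

lemma charmatrix_blockDiagonal (M : k → Matrix n n R) :
    (blockDiagonal M).charmatrix = blockDiagonal fun i => (M i).charmatrix := by
  ext1 ⟨a, i⟩ ⟨b, j⟩
  by_cases hij : i = j <;>
    simp [charmatrix_apply, diagonal_apply, blockDiagonal_apply, hij]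

lemma charpoly_blockDiagonal (M : k → Matrix n n R) :
    (blockDiagonal M).charpoly = ∏ i, (M i).charpoly := by
  simp only [charpoly, charmatrix_blockDiagonal, det_blockDiagonal]

end CharacteristicPolynomials

lemma pow_mul_sub_C_inj_of_monic {R : Type*} [CommRing R] {f : R[X]} (hf : f.Monic)
    (hdeg : 0 < f.natDegree) {k k' : ℕ} {s s' : R} :
    f ^ k * (f - C s) = f ^ k' * (f - C s') ↔ k = k' ∧ s = s' := by
  refine ⟨fun h => ?_, fun ⟨hk, hs⟩ => by rw [hk, hs]⟩
  have natDegree_eq (j : ℕ) (t : R) :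
      (f ^ j * (f - C t)).natDegree = (j + 1) * f.natDegree := by
    have hsub : (f - C t).Monic :=
      hf.sub_of_left (degree_C_le.trans_lt (natDegree_pos_iff_degree_pos.mp hdeg))
    rw [(hf.pow j).natDegree_mul hsub, hf.natDegree_pow, natDegree_sub_C, add_one_mul]
  have hk : k = k' := by
    have hmul := congrArg natDegree h
    rw [natDegree_eq, natDegree_eq] at hmul
    exact Nat.succ_injective (Nat.eq_of_mul_eq_mul_right hdeg hmul)
  subst hk
  exact ⟨rfl, C_injective (sub_right_injective ((hf.pow k).isRegular.left h))⟩

lemma revId_apply (k : ℕ) (i j : Fin k) : revId k i j = if j = i.rev then 1 else 0 := by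
  have h : (i : ℕ) + j = k - 1 ↔ j = i.rev := by
    rw [Fin.ext_iff, Fin.val_rev]
    omega
  simp only [revId, of_apply, h]

/-- The decomposition of `Fin (2 * m)` into the `m` orbits `{i, i.rev}` of reversal, which
identifies the graph with adjacency matrix `revId (2 * m)` with `m·K₂`. The second half is reversed
so that the two vertices of the `i`-th edge are `(0, i)` and `(1, i)`. -/
def revPairing (m : ℕ) : Fin 2 × Fin m ≃ Fin (2 * m) :=
  (Equiv.prodShear (Equiv.refl _) ![Equiv.refl _, Fin.revPerm]).trans finProdFinEquiv

lemma rev_revPairing (m : ℕ) (a : Fin 2) (i : Fin m) :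
    (revPairing m (a, i)).rev = revPairing m (a.rev, i) := by
  have hi := i.isLt
  fin_cases a <;> simp [revPairing, Fin.ext_iff] <;> omega

lemma blockDiagonal_revId_two (m : ℕ) :
    blockDiagonal (fun _ : Fin m => revId 2) =
      (revId (2 * m)).submatrix (revPairing m) (revPairing m) := by
  ext1 ⟨a, i⟩ ⟨b, j⟩
  simp only [blockDiagonal_apply, submatrix_apply, revId_apply, rev_revPairing,
    EmbeddingLike.apply_eq_iff_eq, Prod.mk.injEq, ← ite_and, and_comm, eq_comm]

lemma charpoly_smul_revId_two (s : ℤ) : (s • revId 2).charpoly = X ^ 2 - C (s ^ 2) := by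
  have hs : s • revId 2 = !![0, s; s, 0] := by
    ext i j
    fin_cases i <;> fin_cases j <;> simp [revId]
  rw [hs]
  simp [charpoly, det_fin_two, sq]

lemma charpoly_smul_blockDiagonal_revId_two (s : ℤ) (m : ℕ) :
    (s • blockDiagonal fun _ : Fin m => revId 2).charpoly = (X ^ 2 - C (s ^ 2)) ^ m := by
  rw [← blockDiagonal_smul, charpoly_blockDiagonal]
  simp only [Pi.smul_def, charpoly_smul_revId_two, Finset.prod_const, Finset.card_univ,
    Fintype.card_fin]

lemma charpoly_smul_revId_two_mul (s : ℤ) (m : ℕ) :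
    (s • revId (2 * m)).charpoly = (X ^ 2 - C (s ^ 2)) ^ m := by
  rw [← charpoly_smul_blockDiagonal_revId_two, blockDiagonal_revId_two,
    ← charpoly_reindex (revPairing m).symm (s • revId (2 * m))]
  rfl

-- The factor `X ^ 2 - 1` on the left avoids the truncated exponent `m + l - 1`.
lemma charpoly_A2mat_mul (m l : ℕ) :
    (A2mat m l).charpoly * (X ^ 2 - 1) =
      (X ^ 2 - 1) ^ (m + l) * (X ^ 2 - 1 - C (4 * (m * l) : ℤ)) := by
  have hpos : revId (2 * m) *ᵥ 1 = (1 : ℤ) • 1 := by rw [revId_mulVec_one, one_smul]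
  have hneg : (-revId (2 * l)) *ᵥ 1 = (-1 : ℤ) • 1 := by
    rw [neg_mulVec, revId_mulVec_one, neg_one_smul]
  have hfactor : (X - C 1) * (X - C (-1)) = (X ^ 2 - 1 : ℤ[X]) := by
    simp only [map_neg, map_one]
    ring
  have hm : (revId (2 * m)).charpoly = (X ^ 2 - 1) ^ m := by
    simpa using charpoly_smul_revId_two_mul 1 m
  have hl : (-revId (2 * l)).charpoly = (X ^ 2 - 1) ^ l := by
    simpa using charpoly_smul_revId_two_mul (-1) l
  have hcard : (Fintype.card (Fin (2 * m)) * Fintype.card (Fin (2 * l)) : ℤ) = 4 * (m * l) := by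
    simp only [Fintype.card_fin, Nat.cast_mul, Nat.cast_ofNat]
    ring
  have hjoin := charpoly_fromBlocks_ones_mul hpos hneg
  rwa [hfactor, hm, hl, ← pow_add, hcard] at hjoin

lemma charpoly_A2plus_mul (m l α : ℕ) :
    (A2plus m l α).charpoly * (X ^ 2 - 1) =
      (X ^ 2 - 1) ^ (m + l + α) * (X ^ 2 - 1 - C (4 * (m * l) : ℤ)) := by
  have hK : (blockDiagonal fun _ : Fin α => revId 2).charpoly = (X ^ 2 - 1) ^ α := by
    simpa using charpoly_smul_blockDiagonal_revId_two 1 α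
  rw [A2plus, charpoly_fromBlocks_zero₁₂, hK, mul_right_comm, charpoly_A2mat_mul, pow_add _ _ α,
    mul_right_comm]

theorem stmt7_general (m l m' l' α α' : ℕ) :
    (A2plus m l α).charpoly = (A2plus m' l' α').charpoly ↔
      m * l = m' * l' ∧ m + l + α = m' + l' + α' := by
  have hmonic : (X ^ 2 - 1 : ℤ[X]).Monic := monic_X_pow_sub_C 1 two_ne_zero
  have hdeg : 0 < (X ^ 2 - 1 : ℤ[X]).natDegree := by
    rw [← C_1, natDegree_X_pow_sub_C]
    exact two_pos
  rw [← hmonic.isRegular.right.eq_iff]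
  simp only [charpoly_A2plus_mul]
  rw [pow_mul_sub_C_inj_of_monic hmonic hdeg, and_comm, mul_right_inj' four_ne_zero]
  norm_cast

/-- `A₂(m,ℓ) + α·K₂` and `A₂(m',ℓ') + α'·K₂` are cospectral iff
`mℓ = m'ℓ'` and `m + ℓ + α = m' + ℓ' + α'`. -/
theorem stmt7 (m l m' l' α α' : ℕ) (hl : 2 ≤ l) (hml : l ≤ m) (hl' : 2 ≤ l') (hml' : l' ≤ m') :
    (A2plus m l α).charpoly = (A2plus m' l' α').charpoly ↔
      m * l = m' * l' ∧ m + l + α = m' + l' + α' :=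
  stmt7_general m l m' l' α α'
end
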